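/- Let H be a real Hilbert space, n ≥ 2, and let u, v : [0, T) → H^n be two solutions of the ODE system du_i/dt = Σ_{j≠i} (u_j − u_i)/‖u_j − u_i‖, each with pairwise distinct coordinates at every time in [0, T). Then the function t ↦ Σ_{i=1}^n ‖u_i(t) − v_i(t)‖² is nonincreasing on [0, T). -/

import Mathlib

/-!
The system has the form `uᵢ' = ∑_{j ≠ i} F (uⱼ - uᵢ)` for `F x = x / ‖x‖`, `F 0 = 0`, which is an
odd monotone operator: it is a selection of the subdifferential of the norm. With `w = u - v`, half
the derivative of `∑ᵢ ‖wᵢ‖²` is `∑ᵢ ∑_{j ≠ i} ⟪wᵢ, F (uⱼ - uᵢ) - F (vⱼ - vᵢ)⟫`. As `F` is odd,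
exchanging `i` and `j` turns this into `-½ ∑ᵢ ∑ⱼ ⟪wⱼ - wᵢ, F (uⱼ - uᵢ) - F (vⱼ - vᵢ)⟫`, each term
of which has a sign by the monotonicity of `F`.
-/

open Finset
open scoped RealInnerProductSpace

/-- A monotone operator in the sense of convex analysis, here single-valued and defined on the whole
space; this is the condition on the force under which the particle systems below are contractive. -/
def IsMonotoneOperator {H : Type*} [NormedAddCommGroup H] [InnerProductSpace ℝ H]
    (F : H → H) : Prop :=
  ∀ x y, 0 ≤ ⟪x - y, F x - F y⟫

/-- The velocity field of a system of particles in which the particle at `x j` acts on the one at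
`x i` with force `F (x j - x i)`; a particle does not act on itself, whatever `F 0` is. -/
def pairInteraction {ι H : Type*} [Fintype ι] [DecidableEq ι] [AddCommGroup H]
    (F : H → H) (x : ι → H) (i : ι) : H :=
  ∑ j ∈ univ.erase i, F (x j - x i)

theorem pairInteraction_eq_sum_univ {ι H : Type*} [Fintype ι] [DecidableEq ι] [AddCommGroup H]
    {F : H → H} (hF_zero : F 0 = 0) (x : ι → H) (i : ι) :
    pairInteraction F x i = ∑ j, F (x j - x i) :=
  sum_erase _ (by rw [sub_self, hF_zero])

theorem norm_normalize_le_one {V : Type*} [NormedAddCommGroup V] [NormedSpace ℝ V] (x : V) :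
    ‖NormedSpace.normalize x‖ ≤ 1 := by
  rw [NormedSpace.normalize, norm_smul, norm_inv, norm_norm]
  exact inv_mul_le_one

section InnerProductSpace

variable {ι H : Type*} [Fintype ι] [NormedAddCommGroup H] [InnerProductSpace ℝ H]

theorem real_inner_normalize_self (x : H) : ⟪x, NormedSpace.normalize x⟫ = ‖x‖ := by
  obtain rfl | hx := eq_or_ne x 0
  · simp
  · rw [NormedSpace.normalize, real_inner_smul_right, real_inner_self_eq_norm_mul_norm,
      inv_mul_cancel_left₀ (norm_ne_zero_iff.mpr hx)]

theorem real_inner_normalize_le_norm (x y : H) : ⟪x, NormedSpace.normalize y⟫ ≤ ‖x‖ :=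
  (real_inner_le_norm _ _).trans <|
    mul_le_of_le_one_right (norm_nonneg x) (norm_normalize_le_one y)

theorem isMonotoneOperator_normalize : IsMonotoneOperator (NormedSpace.normalize : H → H) := by
  intro x y
  rw [inner_sub_left, inner_sub_right, inner_sub_right, real_inner_normalize_self,
    real_inner_normalize_self]
  linarith [real_inner_normalize_le_norm x y, real_inner_normalize_le_norm y x]

theorem two_mul_sum_inner_sum_of_antisymm (w : ι → H) {G : ι → ι → H}
    (hG : ∀ i j, G j i = -G i j) :
    2 * ∑ i, ⟪w i, ∑ j, G i j⟫ = -∑ i, ∑ j, ⟪w j - w i, G i j⟫ := by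
  have swap : ∑ i, ∑ j, ⟪w j, G i j⟫ = -∑ i, ∑ j, ⟪w i, G i j⟫ := by
    rw [sum_comm]
    simp only [← sum_neg_distrib, ← inner_neg_right, ← hG]
  simp only [inner_sub_left, sum_sub_distrib, swap, inner_sum]
  ring

theorem IsMonotoneOperator.sum_inner_pairInteraction_sub_nonpos [DecidableEq ι] {F : H → H}
    (hF : IsMonotoneOperator F) (hF_odd : F.Odd) (x y : ι → H) :
    ∑ i, ⟪x i - y i, pairInteraction F x i - pairInteraction F y i⟫ ≤ 0 := by
  let G (i j : ι) : H := F (x j - x i) - F (y j - y i)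
  have G_antisymm (i j : ι) : G j i = -G i j := by
    simp only [G, ← neg_sub (x j) (x i), ← neg_sub (y j) (y i), hF_odd _]
    abel
  have inner_G_nonneg (i j : ι) : 0 ≤ ⟪(x j - y j) - (x i - y i), G i j⟫ := by
    rw [sub_sub_sub_comm]
    exact hF _ _
  have sum_inner_G_nonneg : 0 ≤ ∑ i, ∑ j, ⟪(x j - y j) - (x i - y i), G i j⟫ :=
    sum_nonneg fun i _ ↦ sum_nonneg fun j _ ↦ inner_G_nonneg i j
  have := IsAddTorsionFree.of_isTorsionFree ℝ H
  simp only [pairInteraction_eq_sum_univ hF_odd.map_zero, ← sum_sub_distrib]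
  linarith [two_mul_sum_inner_sum_of_antisymm (fun i ↦ x i - y i) G_antisymm]

end InnerProductSpace

theorem antitoneOn_sum_norm_sq_of_sum_inner_nonpos {ι : Type*} [Fintype ι] {E : ι → Type*}
    [∀ i, NormedAddCommGroup (E i)] [∀ i, InnerProductSpace ℝ (E i)] {s : Set ℝ}
    (hs : Convex ℝ s) {w w' : ∀ i, ℝ → E i}
    (hw : ∀ t ∈ s, ∀ i, HasDerivWithinAt (w i) (w' i t) s t)
    (hw_inner : ∀ t ∈ interior s, ∑ i, ⟪w i t, w' i t⟫ ≤ 0) :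
    AntitoneOn (fun t ↦ ∑ i, ‖w i t‖ ^ 2) s := by
  have hasDeriv (t : ℝ) (ht : t ∈ s) :
      HasDerivWithinAt (fun t ↦ ∑ i, ‖w i t‖ ^ 2) (∑ i, 2 * ⟪w i t, w' i t⟫) s t :=
    .fun_sum fun i _ ↦ (hw t ht i).norm_sq
  refine antitoneOn_of_hasDerivWithinAt_nonpos hs
    (fun t ht ↦ (hasDeriv t ht).continuousWithinAt)
    (fun t ht ↦ (hasDeriv t (interior_subset ht)).mono interior_subset) fun t ht ↦ ?_
  rw [← mul_sum]
  exact mul_nonpos_of_nonneg_of_nonpos zero_le_two (hw_inner t ht)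

theorem flow_nonexpansive_general {ι H : Type*} [Fintype ι] [DecidableEq ι]
    [NormedAddCommGroup H] [InnerProductSpace ℝ H] {F : H → H} (hF : IsMonotoneOperator F)
    (hF_odd : F.Odd) {s : Set ℝ} (hs : Convex ℝ s) {u v : ℝ → ι → H}
    (hu_ode : ∀ t ∈ s, ∀ i, HasDerivWithinAt (fun r ↦ u r i) (pairInteraction F (u t) i) s t)
    (hv_ode : ∀ t ∈ s, ∀ i, HasDerivWithinAt (fun r ↦ v r i) (pairInteraction F (v t) i) s t) :
    AntitoneOn (fun t ↦ ∑ i, ‖u t i - v t i‖ ^ 2) s :=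
  antitoneOn_sum_norm_sq_of_sum_inner_nonpos hs
    (fun t ht i ↦ (hu_ode t ht i).sub (hv_ode t ht i))
    fun t _ ↦ hF.sum_inner_pairInteraction_sub_nonpos hF_odd (u t) (v t)

/-- **Lemma 2.1.** If `u, v : [0, T) → H^n` are two solutions of
`du_i/dt = ∑_{j ≠ i} (u_j − u_i)/‖u_j − u_i‖`, each with pairwise distinct coordinates,
then `t ↦ ∑ i ‖u_i(t) − v_i(t)‖²` is nonincreasing on `[0, T)`. -/
theorem flow_nonexpansive
    {H : Type*} [NormedAddCommGroup H] [InnerProductSpace ℝ H] [CompleteSpace H]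
    (n : ℕ) (hn : 2 ≤ n) (T : ℝ) (u v : ℝ → Fin n → H)
    (hu_distinct : ∀ t ∈ Set.Ico (0 : ℝ) T, ∀ i j : Fin n, i ≠ j → u t i ≠ u t j)
    (hv_distinct : ∀ t ∈ Set.Ico (0 : ℝ) T, ∀ i j : Fin n, i ≠ j → v t i ≠ v t j)
    (hu_ode : ∀ t ∈ Set.Ico (0 : ℝ) T, ∀ i : Fin n,
      HasDerivWithinAt (fun s => u s i)
        (∑ j ∈ Finset.univ.erase i, (‖u t j - u t i‖)⁻¹ • (u t j - u t i))
        (Set.Ico (0 : ℝ) T) t)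
    (hv_ode : ∀ t ∈ Set.Ico (0 : ℝ) T, ∀ i : Fin n,
      HasDerivWithinAt (fun s => v s i)
        (∑ j ∈ Finset.univ.erase i, (‖v t j - v t i‖)⁻¹ • (v t j - v t i))
        (Set.Ico (0 : ℝ) T) t) :
    AntitoneOn (fun t : ℝ => ∑ i : Fin n, ‖u t i - v t i‖ ^ 2) (Set.Ico (0 : ℝ) T) :=
  flow_nonexpansive_general isMonotoneOperator_normalize NormedSpace.normalize_neg
    (convex_Ico 0 T) hu_ode hv_ode
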